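/- arXiv:1503.04856 — 2 statements merged into one kernel-verified Lean document; each statement's English description precedes it below -/
import Mathlib

section
/- Let μ be a singular Borel probability measure on [0,1). Then the linear span of the exponential functions {e_n : n ∈ ℕ} (where e_n(x) = e^{2πinx}) is dense in L²(μ). -/
open MeasureTheory Filter

lemma aux_integral_fourier (n : ℤ) :
    ∫ t : UnitAddCircle, fourier n t ∂AddCircle.haarAddCircle = if n = 0 then 1 else 0 := by
  split_ifs with h
  · subst h; simp
  · exact integral_eq_zero_of_add_right_eq_neg (μ := AddCircle.haarAddCircle)
      (fourier_add_half_inv_index h one_pos)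

lemma aux_pow_fourier (n : ℕ) (t : UnitAddCircle) : (fourier 1 t : ℂ) ^ n = fourier (n : ℤ) t := by
  induction n with
  | zero => simp
  | succ n ih => rw [pow_succ, ih]; push_cast; rw [fourier_add]

lemma aux_integrable (μ : Measure UnitAddCircle) [IsFiniteMeasure μ] (f : UnitAddCircle → ℂ) (hf : Continuous f) :
    Integrable f μ :=
  hf.integrable_of_hasCompactSupport (HasCompactSupport.of_compactSpace f)

lemma aux_integrable' (μ : Measure UnitAddCircle) [IsFiniteMeasure μ] (f : UnitAddCircle → ℝ) (hf : Continuous f) :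
    Integrable f μ :=
  hf.integrable_of_hasCompactSupport (HasCompactSupport.of_compactSpace f)

lemma aux_conj_poly (q : C(UnitAddCircle, ℂ)) (hq : q ∈ Submodule.span ℂ (Set.range (@fourier 1))) :
    ∀ c : ℂ, ∃ g : Polynomial ℂ, (∀ t : UnitAddCircle, (g.eval (fourier 1 t)).re = (c * q t).re) ∧
      (g.eval 0).re = (c * ∫ t, q t ∂AddCircle.haarAddCircle).re := by
  induction hq using Submodule.span_induction with
  | mem x hx =>
    obtain ⟨n, rfl⟩ := hx
    intro c
    rw [aux_integral_fourier]
    rcases le_or_gt 0 n with hn | hn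
    · lift n to ℕ using hn
      refine ⟨Polynomial.C c * Polynomial.X ^ n, fun t => ?_, ?_⟩
      · simp only [Polynomial.eval_mul, Polynomial.eval_C, Polynomial.eval_pow, Polynomial.eval_X,
          aux_pow_fourier]
      · rcases n with _ | n
        · simp
        · have h : ((n + 1 : ℕ) : ℤ) ≠ 0 := by omega
          rw [if_neg h]; simp
    · obtain ⟨m, rfl⟩ : ∃ m : ℕ, n = -(m : ℤ) := ⟨n.natAbs, by omega⟩
      refine ⟨Polynomial.C (starRingEnd ℂ c) * Polynomial.X ^ m, fun t => ?_, ?_⟩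
      · simp only [Polynomial.eval_mul, Polynomial.eval_C, Polynomial.eval_pow, Polynomial.eval_X,
          aux_pow_fourier, fourier_neg]
        rw [← Complex.conj_re]
        simp only [map_mul, Complex.conj_conj]
      · have hm : m ≠ 0 := by omega
        simp [hm]
  | zero => intro c; exact ⟨0, by simp, by simp⟩
  | add x y _ _ hx hy =>
    intro c
    obtain ⟨g, h1, h2⟩ := hx c
    obtain ⟨g', h1', h2'⟩ := hy c
    refine ⟨g + g', fun t => ?_, ?_⟩
    · rw [Polynomial.eval_add, Complex.add_re, h1, h1', ContinuousMap.add_apply, mul_add,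
        Complex.add_re]
    · rw [Polynomial.eval_add, Complex.add_re, h2, h2', ← Complex.add_re, ← mul_add,
        ← integral_add (aux_integrable _ _ x.continuous) (aux_integrable _ _ y.continuous)]
      rfl
  | smul a x _ hx =>
    intro c
    obtain ⟨g, h1, h2⟩ := hx (c * a)
    refine ⟨g, fun t => ?_, ?_⟩
    · rw [h1]; simp [mul_assoc]
    · rw [h2]
      simp only [ContinuousMap.smul_apply, smul_eq_mul]
      rw [integral_const_mul, mul_assoc]

/-- approximating `exp (-g)` by polynomials -/
lemma aux_exp_poly (ν : Measure UnitAddCircle) [IsProbabilityMeasure ν] (g : Polynomial ℂ) (ε : ℝ)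
    (h : ∫ t, ‖Complex.exp (g.eval (fourier 1 t))‖ ^ 2 ∂ν < ε * ‖Complex.exp (g.eval 0)‖ ^ 2) :
    ∃ P : Polynomial ℂ, P.eval 0 = 1 ∧ ∫ t, ‖P.eval (fourier 1 t : ℂ)‖ ^ 2 ∂ν < ε := by
  let S : ℕ → Polynomial ℂ := fun m =>
    ∑ k ∈ Finset.range m, Polynomial.C ((k.factorial : ℂ)⁻¹) * g ^ k
  have hSe : ∀ m z, (S m).eval z = ∑ k ∈ Finset.range m, (g.eval z) ^ k / (k.factorial : ℂ) := by
    intro m z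
    simp only [S, Polynomial.eval_finsetSum, Polynomial.eval_mul, Polynomial.eval_C,
      Polynomial.eval_pow]
    exact Finset.sum_congr rfl fun k _ => by rw [div_eq_inv_mul]
  have hlim : ∀ z, Tendsto (fun m => (S m).eval z) atTop (nhds (Complex.exp (g.eval z))) := by
    intro z
    simp only [hSe]
    have := NormedSpace.expSeries_div_hasSum_exp (g.eval z)
    rw [← Complex.exp_eq_exp_ℂ] at this
    exact this.tendsto_sum_nat
  have hbound : ∀ m z, ‖(S m).eval z‖ ≤ Real.exp ‖g.eval z‖ := by
    intro m z
    rw [hSe]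
    refine (norm_sum_le _ _).trans ?_
    refine le_trans (le_of_eq ?_) (Real.sum_le_exp_of_nonneg (norm_nonneg (g.eval z)) m)
    exact Finset.sum_congr rfl fun k _ => by simp
  have hc : Continuous fun t : UnitAddCircle => g.eval (fourier 1 t : ℂ) :=
    g.continuous.comp (fourier 1).continuous
  have hint : Tendsto (fun m => ∫ t, ‖(S m).eval (fourier 1 t : ℂ)‖ ^ 2 ∂ν) atTop
      (nhds (∫ t, ‖Complex.exp (g.eval (fourier 1 t))‖ ^ 2 ∂ν)) := by
    refine tendsto_integral_of_dominated_convergence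
      (fun t => Real.exp ‖g.eval (fourier 1 t : ℂ)‖ ^ 2) ?_ ?_ ?_ ?_
    · intro m
      exact ((((S m).continuous.comp (fourier 1).continuous).norm).pow 2).aestronglyMeasurable
    · exact aux_integrable' _ _ (by fun_prop)
    · intro m
      refine Eventually.of_forall fun t => ?_
      rw [Real.norm_of_nonneg (by positivity)]
      gcongr
      exact hbound _ _
    · exact Eventually.of_forall fun t => ((hlim _).norm.pow 2)
  have hrhs : Tendsto (fun m => ε * ‖(S m).eval 0‖ ^ 2) atTop
      (nhds (ε * ‖Complex.exp (g.eval 0)‖ ^ 2)) := ((hlim 0).norm.pow 2).const_mul ε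
  have hne : ∀ᶠ m in atTop, (S m).eval 0 ≠ 0 :=
    (hlim 0).eventually_ne (Complex.exp_ne_zero _)
  obtain ⟨m, hm1, hm2⟩ := ((hint.eventually_lt hrhs h).and hne).exists
  refine ⟨Polynomial.C ((S m).eval 0)⁻¹ * S m, by simp [hm2], ?_⟩
  simp only [Polynomial.eval_mul, Polynomial.eval_C, norm_mul, mul_pow, norm_inv]
  rw [integral_const_mul, inv_pow]
  have : 0 < ‖(S m).eval 0‖ ^ 2 := by positivity
  rw [inv_mul_lt_iff₀ this, mul_comm]
  exact hm1

lemma aux_key (ν : Measure UnitAddCircle) [IsProbabilityMeasure ν]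
    (hs : ν.MutuallySingular AddCircle.haarAddCircle) (ε : ℝ) (hε : 0 < ε) :
    ∃ P : Polynomial ℂ, P.eval 0 = 1 ∧ ∫ t, ‖P.eval (fourier 1 t : ℂ)‖ ^ 2 ∂ν < ε := by
  obtain ⟨s, hsm, hs1, hs2⟩ := hs
  -- constants
  obtain ⟨d, hd, hdε⟩ : ∃ d : ℝ, 0 < d ∧ Real.exp 6 * (d + d) < ε :=
    ⟨ε / (4 * Real.exp 6), by positivity, by field_simp; nlinarith⟩
  obtain ⟨M, hM0, hM⟩ : ∃ M : ℝ, 0 < M ∧ Real.exp (-2 * M) < d := by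
    have h1 : Tendsto (fun M : ℝ => Real.exp (-2 * M)) atTop (nhds 0) :=
      Real.tendsto_exp_atBot.comp (tendsto_id.const_mul_atTop_of_neg (by norm_num))
    obtain ⟨M, h, h'⟩ := ((h1.eventually_lt_const hd).and (eventually_gt_atTop 0)).exists
    exact ⟨M, h', h⟩
  obtain ⟨K, hKs, hK, hKd⟩ := hsm.compl.exists_isCompact_sdiff_lt (μ := ν)
    (measure_ne_top _ _) (ε := ENNReal.ofReal d) (by simpa using hd)
  have hKc : ν.real Kᶜ ≤ d := by
    have h1 : ν Kᶜ ≤ ν s + ν (sᶜ \ K) := by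
      refine (measure_mono ?_).trans (measure_union_le _ _)
      intro x hx
      by_cases h : x ∈ s
      · exact Or.inl h
      · exact Or.inr ⟨h, hx⟩
    rw [hs1, zero_add] at h1
    exact ENNReal.toReal_le_of_le_ofReal hd.le (h1.trans hKd.le)
  have hKz : AddCircle.haarAddCircle K < ENNReal.ofReal (1 / M) := by
    rw [measure_mono_null hKs hs2]
    simpa using hM0
  obtain ⟨U, hKU, hU, hUM⟩ := K.exists_isOpen_lt_of_lt _ hKz
  obtain ⟨u, hu0, hu1, hu⟩ := exists_continuous_zero_one_of_isClosed hU.isClosed_compl hK.isClosed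
    (by rw [Set.disjoint_compl_left_iff_subset]; exact hKU)
  let w : C(UnitAddCircle, ℂ) := ⟨fun t => ((-(M * u t) : ℝ) : ℂ), by fun_prop⟩
  have hw : w ∈ (Submodule.span ℂ (Set.range (@fourier 1))).topologicalClosure := by
    rw [span_fourier_closure_eq_top]; trivial
  obtain ⟨q, hq, hqw⟩ := Metric.mem_closure_iff.1 hw 1 one_pos
  obtain ⟨g, hg1, hg2⟩ := aux_conj_poly q hq 1
  simp only [one_mul] at hg1 hg2
  have hqt : ∀ t, ‖q t - w t‖ ≤ 1 := fun t => by
    rw [← dist_eq_norm, dist_comm]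
    exact (ContinuousMap.dist_apply_le_dist t).trans hqw.le
  have hre : ∀ t, |(q t).re + M * u t| ≤ 1 := fun t => by
    refine le_trans ?_ ((Complex.abs_re_le_norm _).trans (hqt t))
    simp [w]
  have hui : ∫ t, u t ∂AddCircle.haarAddCircle ≤ 1 / M := by
    calc ∫ t, u t ∂AddCircle.haarAddCircle
        ≤ ∫ t, U.indicator (fun _ => (1 : ℝ)) t ∂AddCircle.haarAddCircle := by
          refine integral_mono (aux_integrable' _ _ u.continuous)
            ((integrable_const _).indicator hU.measurableSet) fun t => ?_
          by_cases h : t ∈ U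
          · simpa [h] using (hu t).2
          · simpa [h] using (hu0 h).le
      _ = (AddCircle.haarAddCircle : Measure UnitAddCircle).real U := by
          rw [integral_indicator hU.measurableSet]; simp
      _ ≤ 1 / M := ENNReal.toReal_le_of_le_ofReal (by positivity) hUM.le
  have hg0 : -2 ≤ (g.eval 0).re := by
    rw [hg2]
    have h1 : (∫ t, q t ∂AddCircle.haarAddCircle).re = ∫ t, (q t).re ∂AddCircle.haarAddCircle :=
      (integral_re (aux_integrable _ _ q.continuous)).symm
    rw [h1]
    have h2 : ∫ t, (-1 - M * u t) ∂AddCircle.haarAddCircle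
        ≤ ∫ t, (q t).re ∂AddCircle.haarAddCircle := by
      refine integral_mono (aux_integrable' _ _ (by fun_prop)) (aux_integrable' _ _ (by fun_prop))
        fun t => ?_
      have := (abs_le.1 (hre t)).1
      simp only; linarith
    rw [integral_sub (integrable_const _) (aux_integrable' _ _ (by fun_prop)),
      integral_const_mul] at h2
    have h3 : M * ∫ t, u t ∂AddCircle.haarAddCircle ≤ 1 := by
      calc _ ≤ M * (1 / M) := by gcongr
        _ = 1 := by field_simp
    simp at h2
    linarith
  apply aux_exp_poly ν g ε
  have hpt : ∀ t, ‖Complex.exp (g.eval (fourier 1 t : ℂ))‖ ^ 2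
      ≤ Real.exp 2 * (Kᶜ.indicator (fun _ => (1 : ℝ)) t + Real.exp (-2 * M)) := by
    intro t
    rw [Complex.norm_exp, hg1, ← Real.exp_nat_mul]
    have h1 := (abs_le.1 (hre t)).2
    by_cases h : t ∈ K
    · have h2 : u t = 1 := hu1 h
      rw [Set.indicator_of_notMem (by simpa using h), zero_add, ← Real.exp_add]
      apply Real.exp_le_exp.2
      rw [h2] at h1
      push_cast; linarith
    · rw [Set.indicator_of_mem (by simpa using h)]
      have h3 : 0 ≤ M * u t := mul_nonneg hM0.le (hu t).1
      have h4 : Real.exp (((2 : ℕ) : ℝ) * (q t).re) ≤ Real.exp 2 := by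
        apply Real.exp_le_exp.2; push_cast; linarith
      have := mul_pos (Real.exp_pos 2) (Real.exp_pos (-2 * M))
      linarith
  have hmain : ∫ t, ‖Complex.exp (g.eval (fourier 1 t : ℂ))‖ ^ 2 ∂ν
      ≤ Real.exp 2 * (d + d) := by
    have hKm := hK.isClosed.measurableSet.compl
    have hi : Integrable (Kᶜ.indicator (fun _ => (1 : ℝ))) ν := (integrable_const _).indicator hKm
    calc _ ≤ ∫ t, Real.exp 2 * (Kᶜ.indicator (fun _ => (1 : ℝ)) t + Real.exp (-2 * M)) ∂ν := by
          refine integral_mono (aux_integrable' _ _ ?_)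
            ((hi.add (integrable_const _)).const_mul _) hpt
          have hc : Continuous fun t : UnitAddCircle => g.eval (fourier 1 t : ℂ) :=
            g.continuous.comp (fourier 1).continuous
          fun_prop
      _ = Real.exp 2 * (ν.real Kᶜ + Real.exp (-2 * M)) := by
          rw [integral_const_mul, integral_add hi (integrable_const _), integral_indicator hKm]
          simp
      _ ≤ _ := by gcongr
  have hlow : Real.exp (-4) ≤ ‖Complex.exp (g.eval 0)‖ ^ 2 := by
    rw [Complex.norm_exp, ← Real.exp_nat_mul]
    apply Real.exp_le_exp.2; push_cast; linarith
  refine hmain.trans_lt (lt_of_lt_of_le ?_ (mul_le_mul_of_nonneg_left hlow hε.le))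
  have : Real.exp 2 * (d + d) = Real.exp 6 * (d + d) * Real.exp (-4) := by
    rw [mul_right_comm, ← Real.exp_add]; norm_num
  rw [this]
  exact mul_lt_mul_of_pos_right hdε (Real.exp_pos _)
lemma aux_norm_toLp (ν : Measure UnitAddCircle) [IsProbabilityMeasure ν] (f : C(UnitAddCircle, ℂ)) :
    ‖ContinuousMap.toLp (E := ℂ) 2 ν ℂ f‖ ^ 2 = ∫ t, ‖f t‖ ^ 2 ∂ν := by
  have h := ContinuousMap.inner_toLp (𝕜 := ℂ) ν f f
  rw [inner_self_eq_norm_sq_to_K] at h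
  have h2 : (∫ t, f t * (starRingEnd ℂ) (f t) ∂ν) = ((∫ t, ‖f t‖ ^ 2 ∂ν : ℝ) : ℂ) := by
    rw [← integral_complex_ofReal]
    congr 1
    ext t
    rw [Complex.mul_conj']; push_cast; rfl
  rw [h2] at h
  apply Complex.ofReal_injective
  rw [← h]
  push_cast
  rfl

lemma aux_mem (ν : Measure UnitAddCircle) [IsProbabilityMeasure ν]
    (hs : ν.MutuallySingular AddCircle.haarAddCircle) (k : ℕ) : ∀ n : ℤ, -(k : ℤ) ≤ n →
    ContinuousMap.toLp (E := ℂ) 2 ν ℂ (fourier n) ∈ (Submodule.span ℂ (Set.range fun n : ℕ =>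
      ContinuousMap.toLp (E := ℂ) 2 ν ℂ (fourier (n : ℤ) : C(UnitAddCircle, ℂ)))).topologicalClosure := by
  set N := (Submodule.span ℂ (Set.range fun n : ℕ =>
      ContinuousMap.toLp (E := ℂ) 2 ν ℂ (fourier (n : ℤ) : C(UnitAddCircle, ℂ)))).topologicalClosure with hN
  induction k with
  | zero =>
    intro n hn
    lift n to ℕ using (by simpa using hn)
    exact Submodule.le_topologicalClosure _ (Submodule.subset_span ⟨n, rfl⟩)
  | succ k ih =>
    intro n hn
    by_cases hn' : -(k : ℤ) ≤ n
    · exact ih n hn'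
    have hn1 : -(k : ℤ) ≤ n + 1 := by push_cast at hn; omega
    have hcl : IsClosed (N : Set (Lp ℂ 2 ν)) := Submodule.isClosed_topologicalClosure _
    have hQ : ∀ Q : Polynomial ℂ, ContinuousMap.toLp (E := ℂ) 2 ν ℂ
        (fourier (n + 1) * Polynomial.aeval (fourier 1 : C(UnitAddCircle, ℂ)) Q) ∈ N := by
      intro Q
      induction Q using Polynomial.induction_on' with
      | add p q hp hq => rw [map_add, mul_add, map_add]; exact N.add_mem hp hq
      | monomial j a =>
        have : (fourier (n + 1) * Polynomial.aeval (fourier 1 : C(UnitAddCircle, ℂ)) (Polynomial.monomial j a))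
            = a • (fourier (n + 1 + j) : C(UnitAddCircle, ℂ)) := by
          ext t
          simp only [Polynomial.aeval_monomial, ContinuousMap.mul_apply, ContinuousMap.pow_apply,
            aux_pow_fourier, ContinuousMap.smul_apply, fourier_add (n := (j : ℤ)), smul_eq_mul]
          have h0 : (algebraMap ℂ C(UnitAddCircle, ℂ) a) t = a := by simp [Algebra.algebraMap_eq_smul_one]
          rw [h0]
          ring
        rw [this, map_smul]
        exact N.smul_mem _ (ih _ (by omega))
    rw [← SetLike.mem_coe, ← hcl.closure_eq, Metric.mem_closure_iff]
    intro ε hε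
    obtain ⟨P, hP0, hP⟩ := aux_key ν hs (ε ^ 2) (by positivity)
    have hPX : P = Polynomial.X * P.divX + 1 := by
      conv_lhs => rw [← Polynomial.X_mul_divX_add P]
      rw [Polynomial.coeff_zero_eq_eval_zero, hP0, map_one]
    refine ⟨_, N.neg_mem (hQ P.divX), ?_⟩
    rw [dist_eq_norm, sub_neg_eq_add, ← map_add]
    have heq : (fourier n + fourier (n + 1) * Polynomial.aeval (fourier 1 : C(UnitAddCircle, ℂ)) P.divX)
        = fourier n * Polynomial.aeval (fourier 1 : C(UnitAddCircle, ℂ)) P := by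
      conv_rhs => rw [hPX]
      ext t
      simp [-fourier_apply, fourier_add]
      ring
    rw [heq]
    refine lt_of_pow_lt_pow_left₀ 2 hε.le ?_
    rw [aux_norm_toLp]
    refine lt_of_eq_of_lt ?_ hP
    congr 1
    ext t
    have h1 : (Polynomial.aeval (fourier 1 : C(UnitAddCircle, ℂ)) P) t = P.eval (fourier 1 t) := by
      rw [Polynomial.aeval_continuousMap_apply]
    rw [ContinuousMap.mul_apply, norm_mul, h1, fourier_apply (n := n), Circle.norm_coe, one_mul]

lemma aux_circle (ν : Measure UnitAddCircle) [IsProbabilityMeasure ν]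
    (hs : ν.MutuallySingular AddCircle.haarAddCircle) :
    (Submodule.span ℂ (Set.range fun n : ℕ =>
      ContinuousMap.toLp (E := ℂ) 2 ν ℂ (fourier (n : ℤ) : C(UnitAddCircle, ℂ)))).topologicalClosure = ⊤ := by
  rw [eq_top_iff]
  have h := (ContinuousMap.toLp_denseRange (p := 2) ℂ ν ℂ
    (by norm_num)).topologicalClosure_map_submodule (span_fourier_closure_eq_top (T := 1))
  rw [← h]
  refine Submodule.topologicalClosure_minimal _ ?_ (Submodule.isClosed_topologicalClosure _)
  rw [Submodule.map_span, Submodule.span_le]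
  rintro _ ⟨_, ⟨n, rfl⟩, rfl⟩
  exact aux_mem ν hs n.natAbs n (by omega)

/-- For a singular Borel probability measure `μ` on `[0,1)`, the linear span
of the exponentials `e_n(x) = exp(2πinx)`, `n ∈ ℕ`, is dense in `L²(μ)`. -/
theorem span_exponentials_dense
    (μ : Measure ℝ) [IsProbabilityMeasure μ]
    (hsupp : μ (Set.Ico (0 : ℝ) 1)ᶜ = 0)
    (hsing : μ.MutuallySingular MeasureTheory.volume)
    (e : ℕ → Lp ℂ 2 μ)
    (he : ∀ n : ℕ, (e n : ℝ → ℂ) =ᵐ[μ]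
      fun x => Complex.exp (2 * Real.pi * Complex.I * n * x)) :
    Dense ((Submodule.span ℂ (Set.range e) : Submodule ℂ (Lp ℂ 2 μ)) : Set (Lp ℂ 2 μ)) := by
  let mk : ℝ → UnitAddCircle := fun x => (x : UnitAddCircle)
  have hmk : Measurable mk := AddCircle.measurable_mk'
  let s : UnitAddCircle → ℝ := fun t => (AddCircle.measurableEquivIco 1 0 t : ℝ)
  have hsm : Measurable s := measurable_subtype_coe.comp (MeasurableEquiv.measurable _)
  have hsmk : ∀ x ∈ Set.Ico (0 : ℝ) 1, s (mk x) = x := by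
    intro x hx
    exact congrArg Subtype.val ((AddCircle.equivIco 1 (0 : ℝ)).apply_symm_apply
      ⟨x, by simpa using hx⟩)
  have hae : ∀ᵐ x ∂μ, x ∈ Set.Ico (0 : ℝ) 1 := by
    rw [ae_iff]; exact hsupp
  let ν := μ.map mk
  have : IsProbabilityMeasure ν := Measure.isProbabilityMeasure_map hmk.aemeasurable
  have hpm : MeasurePreserving mk μ ν := ⟨hmk, rfl⟩
  have hps : MeasurePreserving s ν μ := by
    refine ⟨hsm, ?_⟩
    rw [Measure.map_map hsm hmk]
    conv_rhs => rw [← Measure.map_id (μ := μ)]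
    exact Measure.map_congr (hae.mono fun x hx => hsmk x hx)
  have hνs : ν.MutuallySingular AddCircle.haarAddCircle := by
    obtain ⟨S, hS, h1, h2⟩ := hsing
    refine ⟨s ⁻¹' S, hsm hS, ?_, ?_⟩
    · rw [hps.measure_preimage hS.nullMeasurableSet, h1]
    · have hv : (volume : Measure UnitAddCircle) (s ⁻¹' S)ᶜ = 0 := by
        rw [← (UnitAddCircle.measurePreserving_mk 0).map_eq,
          Measure.map_apply AddCircle.measurable_mk' (hsm hS).compl, zero_add,
          ← restrict_Ico_eq_restrict_Ioc,
          Measure.restrict_apply (AddCircle.measurable_mk' (hsm hS).compl)]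
        refine measure_mono_null ?_ h2
        rintro x ⟨hx, hx'⟩
        have h3 : s (mk x) ∉ S := hx
        rwa [hsmk x hx'] at h3
      rw [AddCircle.volume_eq_smul_haarAddCircle] at hv
      simpa using hv
  let L := Lp.compMeasurePreservingₗᵢ (E := ℂ) (p := 2) ℂ mk hpm
  have hsurj : Function.Surjective L := by
    intro f
    refine ⟨Lp.compMeasurePreserving s hps f, ?_⟩
    apply Lp.ext
    have h1 := Lp.coeFn_compMeasurePreserving (Lp.compMeasurePreserving s hps f) hpm
    have h2 := hpm.quasiMeasurePreserving.ae_eq_comp (Lp.coeFn_compMeasurePreserving f hps)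
    refine h1.trans (h2.trans ?_)
    filter_upwards [hae] with x hx
    simp [hsmk x hx]
  have hd : Dense ((Submodule.span ℂ (Set.range fun n : ℕ =>
      ContinuousMap.toLp (E := ℂ) 2 ν ℂ (fourier (n : ℤ) : C(UnitAddCircle, ℂ))) :
        Submodule ℂ (Lp ℂ 2 ν)) : Set (Lp ℂ 2 ν)) :=
    Submodule.dense_iff_topologicalClosure_eq_top.2 (aux_circle ν hνs)
  have hd2 := hsurj.denseRange.dense_image L.continuous hd
  refine hd2.mono ?_
  have hLe : ∀ n : ℕ, L (ContinuousMap.toLp (E := ℂ) 2 ν ℂ (fourier (n : ℤ) : C(UnitAddCircle, ℂ))) = e n := by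
    intro n
    apply Lp.ext
    have h1 := Lp.coeFn_compMeasurePreserving
      (ContinuousMap.toLp (E := ℂ) 2 ν ℂ (fourier (n : ℤ) : C(UnitAddCircle, ℂ))) hpm
    have h2 := hpm.quasiMeasurePreserving.ae_eq_comp
      (ContinuousMap.coeFn_toLp (p := 2) (𝕜 := ℂ) ν (fourier (n : ℤ) : C(UnitAddCircle, ℂ)))
    refine h1.trans (h2.trans ?_)
    filter_upwards [he n] with x hx
    rw [hx]
    simp only [Function.comp, mk]
    rw [fourier_coe_apply]
    simp
  rintro _ ⟨f, hf, rfl⟩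
  have h3 : L.toLinearMap f ∈ (Submodule.span ℂ (Set.range fun n : ℕ =>
      ContinuousMap.toLp (E := ℂ) 2 ν ℂ (fourier (n : ℤ) : C(UnitAddCircle, ℂ)))).map L.toLinearMap :=
    Submodule.mem_map_of_mem hf
  rw [Submodule.map_span] at h3
  refine Submodule.span_mono ?_ h3
  rintro _ ⟨_, ⟨n, rfl⟩, rfl⟩
  exact ⟨n, (hLe n).symm⟩
end

section
/- Let μ be a singular Borel probability measure on [0,1), let α_n be the composition-sum coefficients determined by μ̂, and suppose F : ℝ → ℂ has the form F(y) = ∫₀¹ f(x) e^{−2πiyx} dμ(x) for some f ∈ L²(μ). Then F(y) = Σ_{n=0}^∞ (Σ_{j=0}^{n} α_{n−j} F(j)) μ̂(y − n) for all y ∈ ℝ, where the partial sums of the series converge uniformly in y on ℝ. -/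
open MeasureTheory Filter

section Hilb
variable {H : Type*} [NormedAddCommGroup H] [InnerProductSpace ℂ H]

lemma kz_norm (V : H →ₗᵢ[ℂ] H) (e0 : H) (he : ‖e0‖ = 1) (A : H →ₗ[ℂ] H)
    (hA : ∀ f, A f = V (f - (inner ℂ e0 f) • e0)) (f : H) :
    ‖A f‖ ^ 2 = ‖f‖ ^ 2 - ‖(inner ℂ e0 f : ℂ)‖ ^ 2 := by
  rw [hA, V.norm_map]
  have h0 : inner ℂ (f - (inner ℂ e0 f) • e0) ((inner ℂ e0 f : ℂ) • e0) = (0:ℂ) := by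
    rw [inner_smul_right, inner_sub_left, inner_smul_left, inner_self_eq_norm_sq_to_K, he]
    simp
  have h1 := norm_add_sq_eq_norm_sq_add_norm_sq_of_inner_eq_zero _ _ h0
  rw [sub_add_cancel, norm_smul, he] at h1
  nlinarith

lemma kz_norm_pow (V : H →ₗᵢ[ℂ] H) (e0 : H) (he : ‖e0‖ = 1) (A : H →ₗ[ℂ] H)
    (hA : ∀ f, A f = V (f - (inner ℂ e0 f) • e0)) (f : H) (N : ℕ) :
    ‖(A ^ N) f‖ ^ 2 = ‖f‖ ^ 2 - ∑ n ∈ Finset.range N, ‖(inner ℂ e0 ((A ^ n) f) : ℂ)‖ ^ 2 := by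
  induction N with
  | zero => simp
  | succ N ih =>
    rw [pow_succ' A, Module.End.mul_apply, kz_norm V e0 he A hA, ih, Finset.sum_range_succ]
    ring

lemma kz_contr (V : H →ₗᵢ[ℂ] H) (e0 : H) (he : ‖e0‖ = 1) (A : H →ₗ[ℂ] H)
    (hA : ∀ f, A f = V (f - (inner ℂ e0 f) • e0)) (f : H) (N : ℕ) :
    ‖(A ^ N) f‖ ≤ ‖f‖ := by
  have h := kz_norm_pow V e0 he A hA f N
  have : 0 ≤ ∑ n ∈ Finset.range N, ‖(inner ℂ e0 ((A ^ n) f) : ℂ)‖ ^ 2 :=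
    Finset.sum_nonneg fun _ _ => by positivity
  exact (pow_le_pow_iff_left₀ (norm_nonneg _) (norm_nonneg _) two_ne_zero).1 (by linarith)

lemma kz_decomp (U V : H →ₗᵢ[ℂ] H) (hUV : ∀ f, U (V f) = f) (e : ℤ → H)
    (hUe : ∀ n, U (e n) = e (n + 1)) (A : H →ₗ[ℂ] H)
    (hA : ∀ f, A f = V (f - (inner ℂ (e 0) f) • e 0)) (f : H) (N : ℕ) :
    f = ∑ n ∈ Finset.range N, (inner ℂ (e 0) ((A ^ n) f) : ℂ) • e n + (U^[N]) ((A ^ N) f) := by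
  have hUN : ∀ n : ℕ, (U^[n]) (e 0) = e n := by
    intro n
    induction n with
    | zero => simp
    | succ n ih => rw [Function.iterate_succ_apply', ih, hUe]; simp
  induction N with
  | zero => simp
  | succ N ih =>
    have hU : ∀ g : H, U (A g) = g - (inner ℂ (e 0) g) • e 0 := by
      intro g; rw [hA, hUV]
    rw [Finset.sum_range_succ, pow_succ', Module.End.mul_apply, Function.iterate_succ_apply, hU]
    have hlin : ∀ (n : ℕ) (x y : H) (c : ℂ), (U^[n]) (x - c • y) = (U^[n]) x - c • (U^[n]) y := by
      intro n x y c
      induction n with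
      | zero => simp
      | succ n ih => simp only [Function.iterate_succ_apply', ih]; simp
    rw [hlin, hUN]
    nth_rewrite 1 [ih]
    abel

lemma kz_iter_norm (U : H →ₗᵢ[ℂ] H) (f : H) (N : ℕ) : ‖(U^[N]) f‖ = ‖f‖ := by
  induction N with
  | zero => simp
  | succ n ih => rw [Function.iterate_succ_apply', U.norm_map, ih]

lemma kz_inner (U V : H →ₗᵢ[ℂ] H) (hUV : ∀ f, U (V f) = f) (e : ℤ → H)
    (hUe : ∀ n, U (e n) = e (n + 1)) (A : H →ₗ[ℂ] H)
    (hA : ∀ f, A f = V (f - (inner ℂ (e 0) f) • e 0)) (f : H) (N : ℕ) :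
    (inner ℂ (e N) f : ℂ) = ∑ n ∈ Finset.range N, (inner ℂ (e 0) ((A ^ n) f) : ℂ) * inner ℂ (e N) (e n)
      + inner ℂ (e 0) ((A ^ N) f) := by
  have hUN : ∀ n : ℕ, (U^[n]) (e 0) = e n := by
    intro n
    induction n with
    | zero => simp
    | succ n ih => rw [Function.iterate_succ_apply', ih, hUe]; simp
  have hin : ∀ (n : ℕ) (x y : H), inner ℂ ((U^[n]) x) ((U^[n]) y) = inner ℂ x y := by
    intro n x y
    induction n with
    | zero => simp
    | succ n ih => simp only [Function.iterate_succ_apply', U.inner_map_map, ih]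
  have h := kz_decomp U V hUV e hUe A hA f N
  conv_lhs => rw [h]
  rw [inner_add_right, inner_sum]
  congr 1
  · simp [inner_smul_right]
  · rw [← hUN, hin]

lemma kz_all (V : H →ₗᵢ[ℂ] H) (e : ℤ → H) (he : ‖e 0‖ = 1)
    (hVe : ∀ n, V (e n) = e (n - 1)) (A : H →ₗ[ℂ] H)
    (hA : ∀ f, A f = V (f - (inner ℂ (e 0) f) • e 0))
    (hd : Dense (Submodule.span ℂ (Set.range e) : Set H))
    (hz : Tendsto (fun N => (A ^ N) (e (-1))) atTop (nhds 0)) (f : H) :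
    Tendsto (fun N => (A ^ N) f) atTop (nhds 0) := by
  let Z : Submodule ℂ H :=
    { carrier := {f | Tendsto (fun N => (A ^ N) f) atTop (nhds 0)}
      add_mem' := by
        intro a b ha hb
        simpa using Filter.Tendsto.add ha hb
      zero_mem' := by simp
      smul_mem' := by
        intro c a ha
        simpa using Filter.Tendsto.const_smul ha c }
  have hZA : ∀ g, A g ∈ Z ↔ g ∈ Z := by
    intro g
    change Tendsto (fun N => (A ^ N) (A g)) atTop (nhds 0) ↔ Tendsto (fun N => (A ^ N) g) atTop (nhds 0)
    rw [← tendsto_add_atTop_iff_nat (f := fun N => (A ^ N) g) 1]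
    simp [pow_succ]
  have hz' : e (-1) ∈ Z := hz
  have hAe : ∀ n, A (e n) = e (n - 1) - (inner ℂ (e 0) (e n)) • e (-1) := by
    intro n
    rw [hA, map_sub, map_smul, hVe, hVe]; simp
  have hiff : ∀ n, e (n - 1) ∈ Z ↔ e n ∈ Z := by
    intro n
    rw [← hZA (e n), hAe]
    exact (Submodule.sub_mem_iff_left Z (Z.smul_mem _ hz')).symm
  have hall : ∀ n, e n ∈ Z := by
    intro n
    induction n using Int.induction_on with
    | zero => rw [← hiff]; simpa using hz'
    | succ n ih => rw [← hiff]; simpa using ih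
    | pred n ih => rw [hiff]; exact ih
  have hspan : Submodule.span ℂ (Set.range e) ≤ Z := by
    rw [Submodule.span_le]; rintro _ ⟨n, rfl⟩; exact hall n
  rw [Metric.tendsto_atTop]
  intro ε hε
  obtain ⟨g, hg, hfg⟩ := hd.exists_dist_lt f (half_pos hε)
  obtain ⟨N, hN⟩ := (Metric.tendsto_atTop.1 (hspan hg : Tendsto (fun N => (A ^ N) g) atTop (nhds 0))) _ (half_pos hε)
  refine ⟨N, fun n hn => ?_⟩
  have h1 := hN n hn
  have h2 := kz_contr V (e 0) he A hA (f - g) n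
  rw [dist_zero_right] at *
  rw [dist_eq_norm] at hfg
  have : (A ^ n) f = (A ^ n) (f - g) + (A ^ n) g := by rw [← map_add]; simp
  rw [this]
  linarith [norm_add_le ((A ^ n) (f - g)) ((A ^ n) g)]
end Hilb

section Alg
lemma comp_rec (a : ℕ → ℂ) (n : ℕ) :
    (∑ p : Composition (n + 1), (-1 : ℂ) ^ p.length * (p.blocks.map a).prod) =
      - ∑ k : Fin (n + 1), a (k + 1) *
        ∑ p : Composition (n - k), (-1 : ℂ) ^ p.length * (p.blocks.map a).prod := by
  rw [← Finset.sum_neg_distrib]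
  simp_rw [Finset.mul_sum, ← Finset.sum_neg_distrib]
  rw [Finset.sum_sigma']
  symm
  refine Fintype.sum_bijective
    (fun x : (Σ k : Fin (n + 1), Composition (n - k)) =>
      (⟨(x.1.1 + 1) :: x.2.blocks, by
          intro i hi
          rcases List.mem_cons.1 hi with h | h
          · omega
          · exact x.2.blocks_pos h, by
          have := x.1.2
          simp [x.2.blocks_sum]; omega⟩ : Composition (n + 1))) ⟨?_, ?_⟩ _ _ ?_
  · rintro ⟨k, p⟩ ⟨l, q⟩ h
    simp only [Composition.mk.injEq, List.cons.injEq] at h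
    obtain ⟨h1, h2⟩ := h
    have : k = l := by ext; omega
    subst this
    congr
    exact Composition.ext h2
  · intro p
    have hb := p.blocks_sum
    rcases hbl : p.blocks with _ | ⟨b, l⟩
    · rw [hbl] at hb; simp at hb
    · have hpos : 0 < b := p.blocks_pos (by rw [hbl]; simp)
      rw [hbl, List.sum_cons] at hb
      refine ⟨⟨⟨b - 1, by omega⟩, ⟨l, ?_, ?_⟩⟩, ?_⟩
      · intro i hi; exact p.blocks_pos (by rw [hbl]; simp [hi])
      · simp; omega
      · apply Composition.ext
        simp only [hbl]
        congr 1
        omega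
  · rintro ⟨k, p⟩
    simp only [Composition.length, List.length_cons, List.map_cons, List.prod_cons]
    ring

lemma alpha_conv (a α : ℕ → ℂ) (ha0 : a 0 = 1) (hα0 : α 0 = 1)
    (hα : ∀ n : ℕ, 0 < n → α n = ∑ p : Composition n,
      (-1 : ℂ) ^ p.length * (p.blocks.map a).prod) :
    PowerSeries.mk α * PowerSeries.mk a = 1 := by
  have hα' : ∀ n, α n = ∑ p : Composition n,
      (-1 : ℂ) ^ p.length * (p.blocks.map a).prod := by
    intro n
    rcases Nat.eq_zero_or_pos n with rfl | h
    · have hb : ∀ p : Composition 0, p.blocks = [] := by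
        intro p
        have := p.blocks_sum
        rcases h : p.blocks with _ | ⟨b, l⟩
        · rfl
        · have hp : 0 < b := p.blocks_pos (by rw [h]; simp)
          rw [h] at this; simp at this; omega
      rw [hα0]
      simp only [Composition.length, hb]
      simp [composition_card]
    · exact hα n h
  ext n
  rw [mul_comm, PowerSeries.coeff_mul, Finset.Nat.sum_antidiagonal_eq_sum_range_succ_mk]
  simp only [PowerSeries.coeff_mk, PowerSeries.coeff_one]
  rcases n with _ | n
  · simp [ha0, hα0]
  · rw [Finset.sum_range_succ', if_neg (by omega)]
    simp only [ha0, one_mul, Nat.sub_zero]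
    rw [hα' (n + 1), comp_rec, Finset.sum_range]
    simp only [← hα', Nat.add_sub_add_right]
    ring
end Alg

section Circ
open AddCircle

lemma fourier_pow_nat (n : ℕ) (w : UnitAddCircle) :
    (fourier (n : ℤ) w : ℂ) = (fourier 1 w) ^ n := by
  induction n with
  | zero => simp
  | succ n ih => rw [pow_succ, ← ih]; push_cast; rw [fourier_add]

lemma fourier_norm_one (n : ℤ) (w : UnitAddCircle) : ‖(fourier n w : ℂ)‖ = 1 := by
  rw [fourier_apply]; exact Circle.norm_coe _

lemma parseval_le (c : ℕ → ℂ) (hs : Summable fun n => ‖c n‖) (B : ℝ)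
    (hB : ∀ N, ∑ n ∈ Finset.range N, ‖c n‖ ^ 2 ≤ B) :
    ∃ g : C(UnitAddCircle, ℂ), (∀ w, HasSum (fun n : ℕ => c n * fourier (n : ℤ) w) (g w)) ∧
      ∫ w, ‖g w‖ ^ 2 ∂haarAddCircle ≤ B := by
  have hsum : Summable (fun n : ℕ => c n • (fourier (n : ℤ) : C(UnitAddCircle, ℂ))) := by
    apply Summable.of_norm
    simpa [norm_smul, fourier_norm] using hs
  obtain ⟨g, hg⟩ := hsum
  refine ⟨g, fun w => ?_, ?_⟩
  · have := (ContinuousMap.evalCLM ℂ w).hasSum hg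
    simpa using this
  · have h1 := (ContinuousMap.toLp (E := ℂ) 2 (haarAddCircle (T := (1:ℝ))) ℂ).hasSum hg
    have h2 := h1.tendsto_sum_nat
    have h3 := (h2.norm.pow 2)
    have h4 : ‖ContinuousMap.toLp (E := ℂ) 2 (haarAddCircle (T := (1:ℝ))) ℂ g‖ ^ 2 ≤ B := by
      refine le_of_tendsto h3 (Eventually.of_forall fun N => ?_)
      refine le_trans (le_of_eq ?_) (hB N)
      have ho := (orthonormal_fourier (T := (1:ℝ))).comp (fun n : ℕ => (n : ℤ)) Nat.cast_injective
      have h5 := ho.inner_sum c c (Finset.range N)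
      rw [inner_self_eq_norm_sq_to_K] at h5
      have h6 : (∑ i ∈ Finset.range N, (starRingEnd ℂ) (c i) * c i) =
          ((∑ n ∈ Finset.range N, ‖c n‖ ^ 2 : ℝ) : ℂ) := by
        push_cast
        refine Finset.sum_congr rfl fun i _ => ?_
        rw [mul_comm, Complex.mul_conj, Complex.normSq_eq_norm_sq]; push_cast; rfl
      rw [h6] at h5
      have h7 : ‖∑ i ∈ Finset.range N, c i • (fourierLp 2 (i : ℤ) : Lp ℂ 2 (haarAddCircle (T := (1:ℝ))))‖ ^ 2
        = ∑ n ∈ Finset.range N, ‖c n‖ ^ 2 := by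
        apply Complex.ofReal_injective
        rw [← h5]; push_cast; rfl
      rw [← h7]
      simp [fourierLp]
    refine le_trans (le_of_eq ?_) h4
    have h5 := inner_self_eq_norm_sq_to_K (𝕜 := ℂ)
      (ContinuousMap.toLp (E := ℂ) 2 (haarAddCircle (T := (1:ℝ))) ℂ g)
    rw [ContinuousMap.inner_toLp] at h5
    have h6 : ∀ x, (g x) * (starRingEnd ℂ) (g x) = ((‖g x‖ ^ 2 : ℝ) : ℂ) := by
      intro x
      rw [Complex.mul_conj, Complex.normSq_eq_norm_sq]
    simp_rw [h6] at h5
    rw [integral_complex_ofReal] at h5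
    apply Complex.ofReal_injective
    rw [h5]; push_cast; rfl

lemma pw_bound (A M : ℂ) (P : ℝ) (hP : 0 ≤ P) (hMA : M * A = 1) (hM : 2 * M.re = 1 + P) :
    1 - ‖1 - A‖ ^ 2 ≤ 4 * P := by
  have hM0 : M ≠ 0 := by rintro rfl; simp at hMA
  have hA : A = M⁻¹ := by field_simp; rw [mul_comm]; exact hMA
  have e1 : ‖M‖ ^ 2 * (1 - ‖1 - A‖ ^ 2) = P := by
    have : ‖M‖ ^ 2 * ‖1 - A‖ ^ 2 = ‖M - 1‖ ^ 2 := by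
      rw [← mul_pow, ← norm_mul, mul_sub, hMA, mul_one]
    rw [mul_sub, this, Complex.sq_norm, Complex.sq_norm, Complex.normSq_apply, Complex.normSq_apply]
    simp
    linarith
  have e2 : 1 / 4 ≤ ‖M‖ ^ 2 := by
    rw [Complex.sq_norm, Complex.normSq_apply]
    nlinarith [mul_self_nonneg M.im]
  by_contra h
  push Not at h
  nlinarith

lemma re_kernel (u : ℂ) (hu : ‖u‖ < 1) :
    2 * (1 / (1 - u)).re = 1 + (1 - ‖u‖ ^ 2) / ‖1 - u‖ ^ 2 := by
  have h0 : 1 - u ≠ 0 := by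
    intro h
    have : u = 1 := by linear_combination -h
    rw [this] at hu; simp at hu
  have h1 : ‖1 - u‖ ^ 2 ≠ 0 := by simpa using h0
  rw [one_div, Complex.inv_re, ← Complex.sq_norm]
  field_simp
  rw [Complex.sq_norm, Complex.sq_norm, Complex.normSq_apply, Complex.normSq_apply]
  simp
  ring

/-- the kernel variable -/
@[irreducible] noncomputable def uu (r : ℝ) (z w : UnitAddCircle) : ℂ := r * (fourier 1 w * fourier (-1) z)

lemma uu_cont (r : ℝ) : Continuous (fun q : UnitAddCircle × UnitAddCircle => uu r q.1 q.2) := by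
  unfold uu; fun_prop

lemma uu_norm (r : ℝ) (hr : 0 ≤ r) (z w : UnitAddCircle) : ‖uu r z w‖ = r := by
  unfold uu
  rw [norm_mul, norm_mul, fourier_norm_one, fourier_norm_one]; simp [abs_of_nonneg hr]

lemma uu_ne (r : ℝ) (hr : 0 ≤ r) (hr1 : r < 1) (z w : UnitAddCircle) : 1 - uu r z w ≠ 0 := by
  intro h
  have h2 : uu r z w = 1 := by linear_combination -h
  have := uu_norm r hr z w
  rw [h2] at this; simp at this; linarith

lemma kern_cont (r : ℝ) (hr : 0 ≤ r) (hr1 : r < 1) :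
    Continuous (fun q : UnitAddCircle × UnitAddCircle => 1 / (1 - uu r q.1 q.2)) := by
  have := uu_cont r
  exact continuous_const.div (by fun_prop) (fun q => uu_ne r hr hr1 _ _)

lemma kern_cont_left (r : ℝ) (hr : 0 ≤ r) (hr1 : r < 1) (w : UnitAddCircle) :
    Continuous (fun z : UnitAddCircle => 1 / (1 - uu r z w)) := by
  have h : Continuous (fun z : UnitAddCircle => uu r z w) := by
    unfold uu; fun_prop
  exact continuous_const.div (by fun_prop) (fun q => uu_ne r hr hr1 _ _)

@[irreducible] noncomputable def pp (r : ℝ) (z w : UnitAddCircle) : ℝ := (1 - r ^ 2) / ‖1 - uu r z w‖ ^ 2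

lemma pp_nonneg (r : ℝ) (hr : 0 ≤ r) (hr1 : r < 1) (z w : UnitAddCircle) : 0 ≤ pp r z w := by
  unfold pp
  have : 0 ≤ 1 - r ^ 2 := by nlinarith
  positivity

lemma pp_cont (r : ℝ) (hr : 0 ≤ r) (hr1 : r < 1) :
    Continuous (fun q : UnitAddCircle × UnitAddCircle => pp r q.1 q.2) := by
  have := uu_cont r
  unfold pp
  refine continuous_const.div (by fun_prop) (fun q => ?_)
  simpa using uu_ne r hr hr1 q.1 q.2

lemma uu_pow (r : ℝ) (z w : UnitAddCircle) (n : ℕ) :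
    uu r z w ^ n = (r ^ n * fourier (-(n : ℤ)) z) * fourier (n : ℤ) w := by
  unfold uu
  rw [mul_pow, mul_pow, ← fourier_pow_nat, fourier_neg, fourier_neg, fourier_pow_nat n z, map_pow]
  ring

lemma pp_int (r : ℝ) (hr : 0 ≤ r) (hr1 : r < 1) (z : UnitAddCircle) :
    ∫ w, pp r z w ∂haarAddCircle ≤ 1 := by
  have hr2 : r ^ 2 < 1 := by nlinarith
  have hcn : ∀ n : ℕ, ‖((r : ℂ) ^ n * fourier (-(n : ℤ)) z)‖ = r ^ n := by
    intro n
    rw [norm_mul, fourier_norm_one]; simp [abs_of_nonneg hr]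
  obtain ⟨g, hg, hgi⟩ := parseval_le (fun n => (r : ℂ) ^ n * fourier (-(n : ℤ)) z)
    (by simp_rw [hcn]; exact summable_geometric_of_lt_one hr hr1) (1 - r ^ 2)⁻¹ (by
      intro N
      simp_rw [hcn]
      have h1 : ∀ n : ℕ, (r ^ n) ^ 2 = (r ^ 2) ^ n := fun n => by ring
      simp_rw [h1]
      rw [← tsum_geometric_of_lt_one (by positivity) hr2]
      exact (summable_geometric_of_lt_one (by positivity) hr2).sum_le_tsum _
        (fun _ _ => by positivity))
  have hgw : ∀ w, g w = (1 - uu r z w)⁻¹ := by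
    intro w
    have h1 := hg w
    simp_rw [← uu_pow] at h1
    exact h1.unique (hasSum_geometric_of_norm_lt_one (by rw [uu_norm r hr]; exact hr1))
  have h2 : ∀ w, pp r z w = (1 - r ^ 2) * ‖g w‖ ^ 2 := by
    intro w
    rw [hgw, pp, norm_inv, inv_pow]; rfl
  simp_rw [h2]
  rw [integral_const_mul]
  calc _ ≤ (1 - r ^ 2) * (1 - r ^ 2)⁻¹ := by gcongr
    _ = 1 := mul_inv_cancel₀ (by linarith)

lemma cont_integrable {X E : Type*} [TopologicalSpace X] [CompactSpace X] [MeasurableSpace X]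
    [BorelSpace X] [NormedAddCommGroup E] [SecondCountableTopologyEither X E]
    (m : Measure X) [IsFiniteMeasure m] (f : X → E)
    (hf : Continuous f) : Integrable f m := by
  obtain ⟨C, hC⟩ := (isCompact_range hf).isBounded.exists_norm_le
  exact Integrable.of_bound hf.aestronglyMeasurable C
    (Eventually.of_forall fun x => hC _ ⟨x, rfl⟩)

end Circ

section Main1
open AddCircle

lemma M_hasSum (m : Measure UnitAddCircle) [IsProbabilityMeasure m] (a : ℕ → ℂ)
    (ha : ∀ n : ℕ, a n = ∫ z, fourier (-(n : ℤ)) z ∂m) (r : ℝ) (hr : 0 ≤ r) (hr1 : r < 1)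
    (w : UnitAddCircle) :
    HasSum (fun n => a n * (r * fourier 1 w) ^ n) (∫ z, 1 / (1 - uu r z w) ∂m) := by
  have hc : Continuous (fun z => uu r z w) := by
    have := uu_cont r
    exact this.comp (by fun_prop : Continuous fun z : UnitAddCircle => (z, w))
  have h := hasSum_integral_of_summable_integral_norm (μ := m) (F := fun (n : ℕ) z => uu r z w ^ n)
    (fun n => cont_integrable m _ (by fun_prop)) (by
      have hn : ∀ (n : ℕ) z, ‖uu r z w ^ n‖ = r ^ n := fun n z => by rw [norm_pow, uu_norm r hr]
      simp only [hn]
      simpa using summable_geometric_of_lt_one hr hr1)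
  have h1 : ∀ z, ∑' n : ℕ, uu r z w ^ n = 1 / (1 - uu r z w) := by
    intro z
    rw [tsum_geometric_of_norm_lt_one (by rw [uu_norm r hr]; exact hr1), one_div]
  simp_rw [h1] at h
  have h2 : (fun n => a n * ((r : ℂ) * fourier 1 w) ^ n) = fun n : ℕ => ∫ z, uu r z w ^ n ∂m := by
   funext n
   simp only [uu_pow]
   rw [integral_mul_const, integral_const_mul, ha, mul_pow, fourier_pow_nat]
   ring
  rw [h2]
  exact h

lemma M_re (m : Measure UnitAddCircle) [IsProbabilityMeasure m]
    (r : ℝ) (hr : 0 ≤ r) (hr1 : r < 1) (w : UnitAddCircle) :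
    2 * (∫ z, 1 / (1 - uu r z w) ∂m).re = 1 + ∫ z, pp r z w ∂m := by
  have hz : Continuous fun z : UnitAddCircle => (z, w) := by fun_prop
  have hk : Continuous (fun z => 1 / (1 - uu r z w)) := kern_cont_left r hr hr1 w
  have hi : Integrable (fun z => 1 / (1 - uu r z w)) m := cont_integrable m _ hk
  have hp : Continuous (fun z => pp r z w) := (pp_cont r hr hr1).comp hz
  have hi2 : Integrable (fun z => pp r z w) m :=
    cont_integrable m _ hp
  have h1 : (∫ z, 1 / (1 - uu r z w) ∂m).re = ∫ z, (1 / (1 - uu r z w)).re ∂m :=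
    (Complex.reCLM.integral_comp_comm hi).symm
  rw [h1, ← integral_const_mul]
  have h2 : ∀ z, 2 * (1 / (1 - uu r z w)).re = 1 + pp r z w := by
    intro z
    rw [re_kernel _ (by rw [uu_norm r hr]; exact hr1), uu_norm r hr, pp]
  simp_rw [h2]
  rw [integral_add (integrable_const _) hi2]
  simp

lemma pp_le (r : ℝ) (hr : 0 ≤ r) (hr1 : r < 1) (z w : UnitAddCircle) (δ ε : ℝ) (hδ : 0 < δ)
    (hd : δ ≤ ‖(fourier 1 z : ℂ) - fourier 1 w‖) (h1 : 1 - r ≤ δ / 2)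
    (h2 : 8 * (1 - r) ≤ ε * δ ^ 2) : pp r z w ≤ ε := by
  have h3 : ‖1 - uu r z w‖ = ‖(fourier 1 z : ℂ) - r * fourier 1 w‖ := by
    have : (fourier 1 z : ℂ) - r * fourier 1 w = fourier 1 z * (1 - uu r z w) := by
      have h4 : (fourier 1 z : ℂ) * fourier (-1) z = 1 := by
        rw [← fourier_add]; simp
      unfold uu
      linear_combination (r * fourier 1 w : ℂ) * h4
    rw [this, norm_mul, fourier_norm_one, one_mul]
  have h5 : δ / 2 ≤ ‖1 - uu r z w‖ := by
    rw [h3]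
    have e1 : (fourier 1 z : ℂ) - fourier 1 w = (fourier 1 z - r * fourier 1 w) + (r - 1 : ℝ) * fourier 1 w := by
      push_cast; ring
    have e2 : ‖(((r - 1 : ℝ) : ℂ) * fourier 1 w)‖ = 1 - r := by
      rw [norm_mul, fourier_norm_one, Complex.norm_real, Real.norm_eq_abs, abs_of_neg (by linarith)]
      ring
    have e3 := norm_add_le ((fourier 1 z : ℂ) - r * fourier 1 w) ((r - 1 : ℝ) * fourier 1 w)
    rw [← e1, e2] at e3
    linarith
  unfold pp
  have h7 : 0 < ‖1 - uu r z w‖ := by linarith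
  rw [div_le_iff₀ (by positivity)]
  have h6 : (δ / 2) ^ 2 ≤ ‖1 - uu r z w‖ ^ 2 := by gcongr
  have hε : 0 ≤ ε := by
    by_contra h
    push Not at h
    nlinarith [mul_pos (neg_pos.2 h) (pow_pos hδ 2)]
  nlinarith [mul_le_mul_of_nonneg_left h6 hε]

lemma key_bound (m : Measure UnitAddCircle) [IsProbabilityMeasure m] (a α : ℕ → ℂ)
    (ha : ∀ n : ℕ, a n = ∫ z, fourier (-(n : ℤ)) z ∂m)
    (hconv : PowerSeries.mk α * PowerSeries.mk a = 1) (hα0 : α 0 = 1) (B : ℝ) (hB0 : 0 ≤ B)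
    (hαb' : ∀ n, ‖α n‖ ≤ B + 1) (hab : ∀ n, ‖a n‖ ≤ 1) (r : ℝ) (hr : 0 ≤ r) (hr1 : r < 1)
    (b : C(UnitAddCircle, ℂ)) (w : UnitAddCircle)
    (hb : HasSum (fun n : ℕ => (if n = 0 then 0 else α n * (r : ℂ) ^ n) * fourier (n : ℤ) w) (b w)) :
    1 - ‖b w‖ ^ 2 ≤ 4 * ∫ z, pp r z w ∂m := by
  have hgeo := summable_geometric_of_lt_one hr hr1
  have hM := M_hasSum m a ha r hr hr1 w
  have hx : ‖(r * fourier 1 w : ℂ)‖ = r := by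
    rw [norm_mul, fourier_norm_one]; simp [abs_of_nonneg hr]
  have hA : HasSum (fun n => α n * (r * fourier 1 w) ^ n) (1 + b w) := by
    have h1 := hb
    have h2 : HasSum (fun n : ℕ => if n = 0 then (1:ℂ) else 0) 1 := hasSum_ite_eq 0 1
    convert h2.add h1 using 2 with n
    rcases n with _ | n
    · simp [hα0]
    · simp only [fourier_pow_nat, mul_pow]
      simp; ring
  have hsA : Summable fun n => ‖α n * (r * fourier 1 w) ^ n‖ := by
    refine Summable.of_nonneg_of_le (fun _ => norm_nonneg _) (fun n => ?_) (hgeo.mul_left (B + 1))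
    rw [norm_mul, norm_pow, hx]
    gcongr
    exact hαb' n
  have hsM : Summable fun n => ‖a n * (r * fourier 1 w) ^ n‖ := by
    refine Summable.of_nonneg_of_le (fun _ => norm_nonneg _) (fun n => ?_) (hgeo.mul_left 1)
    rw [norm_mul, norm_pow, hx]
    gcongr
    exact hab n
  have hprod := tsum_mul_tsum_eq_tsum_sum_antidiagonal_of_summable_norm hsA hsM
  rw [hA.tsum_eq, hM.tsum_eq] at hprod
  have hco : ∀ n, (∑ kl ∈ Finset.HasAntidiagonal.antidiagonal n, α kl.1 * (r * fourier 1 w : ℂ) ^ kl.1 *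
      (a kl.2 * (r * fourier 1 w) ^ kl.2)) = if n = 0 then 1 else 0 := by
    intro n
    have h1 := congrArg (PowerSeries.coeff n) hconv
    rw [PowerSeries.coeff_mul, PowerSeries.coeff_one] at h1
    simp only [PowerSeries.coeff_mk] at h1
    have h2 : (∑ kl ∈ Finset.HasAntidiagonal.antidiagonal n, α kl.1 * (r * fourier 1 w : ℂ) ^ kl.1 *
      (a kl.2 * (r * fourier 1 w) ^ kl.2)) =
      (∑ kl ∈ Finset.HasAntidiagonal.antidiagonal n, α kl.1 * a kl.2) * (r * fourier 1 w : ℂ) ^ n := by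
      rw [Finset.sum_mul]
      refine Finset.sum_congr rfl fun kl hkl => ?_
      rw [← Finset.HasAntidiagonal.mem_antidiagonal.1 hkl, pow_add]; ring
    rw [h2, h1]
    split_ifs with h
    · simp [h]
    · simp
  simp_rw [hco] at hprod
  rw [tsum_ite_eq] at hprod
  have := pw_bound (1 + b w) (∫ z, 1 / (1 - uu r z w) ∂m) (∫ z, pp r z w ∂m)
    (integral_nonneg fun z => pp_nonneg r hr hr1 z w) (by rw [mul_comm]; exact hprod)
    (M_re m r hr hr1 w)
  simpa using this

set_option maxHeartbeats 400000 in
lemma inner_fn (m : Measure UnitAddCircle) [IsProbabilityMeasure m]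
    (hm : m.MutuallySingular haarAddCircle) (a α : ℕ → ℂ)
    (ha : ∀ n : ℕ, a n = ∫ z, fourier (-(n : ℤ)) z ∂m)
    (hconv : PowerSeries.mk α * PowerSeries.mk a = 1) (hα0 : α 0 = 1) (B : ℝ)
    (hB : ∀ N, ∑ n ∈ Finset.range N, ‖α (n + 1)‖ ^ 2 ≤ B) : 1 ≤ B := by
  suffices hε : ∀ ε > 0, 1 ≤ B + 9 * ε by
    refine le_of_forall_pos_le_add fun ε he => ?_
    have := hε (ε / 9) (by positivity)
    linarith
  intro ε hε
  obtain ⟨S, hS, hmS, hvS⟩ := hm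
  have hε' : (ENNReal.ofReal ε) ≠ 0 := by simpa using hε
  obtain ⟨K, hKS, hK, hmK⟩ := hS.compl.exists_isCompact_lt_add (μ := m) (measure_ne_top _ _) hε'
  have hmKc : m.real Kᶜ ≤ ε := by
    have h1 : m Sᶜ = 1 := by rw [prob_compl_eq_one_iff hS]; exact hmS
    have h2 : 1 < m.real K + ε := by
      rw [h1] at hmK
      have := (ENNReal.toReal_lt_toReal (by simp) (by finiteness)).2 hmK
      rw [ENNReal.toReal_add (by finiteness) (by finiteness), ENNReal.toReal_ofReal hε.le, ENNReal.toReal_one] at this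
      exact this
    rw [probReal_compl_eq_one_sub hK.measurableSet]
    linarith
  have hvK : haarAddCircle K = 0 := measure_mono_null hKS hvS
  obtain ⟨V, hKV, hVo, hvV⟩ := K.exists_isOpen_lt_of_lt (μ := haarAddCircle) (ENNReal.ofReal ε)
    (by rw [hvK]; simpa using hε)
  have hvVr : (haarAddCircle (T := (1:ℝ))).real V ≤ ε := by
    exact ENNReal.toReal_le_of_le_ofReal hε.le hvV.le
  obtain ⟨δ, hδ, hδK⟩ := (hK.prod hVo.isClosed_compl.isCompact).exists_forall_le'
    (f := fun q : UnitAddCircle × UnitAddCircle => ‖(fourier 1 q.1 : ℂ) - fourier 1 q.2‖) (a := 0)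
    (by fun_prop) (by
      rintro ⟨z, w⟩ ⟨hz, hw⟩
      simp only [norm_pos_iff, ne_eq, sub_eq_zero]
      intro h
      rw [fourier_one, fourier_one] at h
      have h2 := injective_toCircle (T := (1:ℝ)) one_ne_zero (Subtype.ext h)
      exact hw (h2 ▸ hKV hz))
  -- choose r
  obtain ⟨r, hr, hr1, hrd, hre⟩ : ∃ r : ℝ, 0 ≤ r ∧ r < 1 ∧ 1 - r ≤ δ / 2 ∧ 8 * (1 - r) ≤ ε * δ ^ 2 := by
    refine ⟨1 - min 1 (min (δ / 2) (ε * δ ^ 2 / 8)), ?_, ?_, ?_, ?_⟩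
    · simp
    · have : 0 < min 1 (min (δ / 2) (ε * δ ^ 2 / 8)) := by positivity
      linarith
    · have : min 1 (min (δ / 2) (ε * δ ^ 2 / 8)) ≤ δ / 2 := (min_le_right _ _).trans (min_le_left _ _)
      linarith
    · have : min 1 (min (δ / 2) (ε * δ ^ 2 / 8)) ≤ ε * δ ^ 2 / 8 :=
        (min_le_right _ _).trans (min_le_right _ _)
      linarith
  have hB0 : 0 ≤ B := by simpa using hB 0
  have hαb : ∀ n, ‖α (n + 1)‖ ≤ B + 1 := by
    intro n
    have h1 : ‖α (n + 1)‖ ^ 2 ≤ B :=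
      (Finset.single_le_sum (f := fun n => ‖α (n + 1)‖ ^ 2) (fun _ _ => by positivity)
        (Finset.self_mem_range_succ n)).trans (hB (n + 1))
    nlinarith [norm_nonneg (α (n + 1))]
  have hαb' : ∀ n, ‖α n‖ ≤ B + 1 := by
    intro n
    rcases n with _ | n
    · rw [hα0]; simp [hB0]
    · exact hαb n
  have hab : ∀ n, ‖a n‖ ≤ 1 := by
    intro n
    rw [ha]
    refine (norm_integral_le_of_norm_le_const (C := 1)
      (Eventually.of_forall fun z => (fourier_norm_one _ z).le)).trans (by simp)
  have hgeo := summable_geometric_of_lt_one hr hr1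
  -- the function b
  let c : ℕ → ℂ := fun n => if n = 0 then 0 else α n * r ^ n
  have hcn : ∀ n, ‖c n‖ ≤ (B + 1) * r ^ n := by
    intro n
    by_cases h : n = 0
    · simp only [c, h, if_true]; simp; linarith
    · simp only [c, h, if_false, norm_mul, norm_pow, Complex.norm_real, Real.norm_eq_abs,
        abs_of_nonneg hr]
      gcongr
      exact hαb' n
  obtain ⟨b, hb, hbi⟩ := parseval_le c
    (Summable.of_nonneg_of_le (fun _ => norm_nonneg _) hcn (hgeo.mul_left _)) B (by
      intro N
      rcases N with _ | N
      · simpa using hB0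
      · rw [Finset.sum_range_succ']
        refine le_trans ?_ (hB N)
        simp only [c, if_true, norm_zero]
        simp only [ne_eq, OfNat.ofNat_ne_zero, not_false_eq_true, zero_pow, add_zero,
          Nat.add_eq_zero_iff, one_ne_zero, and_false, if_false]
        refine Finset.sum_le_sum fun n _ => ?_
        gcongr
        rw [norm_mul, norm_pow, Complex.norm_real, Real.norm_eq_abs, abs_of_nonneg hr]
        exact mul_le_of_le_one_right (norm_nonneg _) (pow_le_one₀ hr hr1.le))
  have key : ∀ w, 1 - ‖b w‖ ^ 2 ≤ 4 * ∫ z, pp r z w ∂m := fun w =>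
    key_bound m a α ha hconv hα0 B hB0 hαb' hab r hr hr1 b w (hb w)
  have hppw : ∀ w, Continuous (fun z => pp r z w) := fun w =>
    (pp_cont r hr hr1).comp (by fun_prop : Continuous fun z : UnitAddCircle => (z, w))
  have key2 : ∀ w, 1 - ‖b w‖ ^ 2 ≤ V.indicator 1 w + 4 * ε + 4 * ∫ z in Kᶜ, pp r z w ∂m := by
    intro w
    have hn : 0 ≤ ∫ z in Kᶜ, pp r z w ∂m := integral_nonneg fun z => pp_nonneg r hr hr1 z w
    by_cases hw : w ∈ V
    · rw [Set.indicator_of_mem hw]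
      have : 0 ≤ ‖b w‖ ^ 2 := by positivity
      simp only [Pi.one_apply]; linarith
    · rw [Set.indicator_of_notMem hw]
      have h1 := key w
      have h2 := integral_add_compl hK.measurableSet (cont_integrable m _ (hppw w))
      have h3 : ∫ z in K, pp r z w ∂m ≤ ∫ z in K, ε ∂m := by
        refine setIntegral_mono_on (cont_integrable m _ (hppw w)).integrableOn
          (integrable_const _) hK.measurableSet fun z hz => ?_
        exact pp_le r hr hr1 z w δ ε hδ (hδK (z, w) ⟨hz, hw⟩) hrd hre
      rw [setIntegral_const, smul_eq_mul] at h3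
      have h4 : m.real K ≤ 1 := measureReal_le_one
      nlinarith
  have hcontP : Integrable (Function.uncurry fun w z => pp r z w)
      ((haarAddCircle (T := (1:ℝ))).prod (m.restrict Kᶜ)) := by
    have hc : Continuous (Function.uncurry fun w z => pp r z w) :=
      (pp_cont r hr hr1).comp continuous_swap
    exact cont_integrable _ _ hc
  have hI1 : Integrable (fun w => ‖b w‖ ^ 2) (haarAddCircle (T := (1:ℝ))) :=
    cont_integrable _ _ (by fun_prop)
  have hI2 : Integrable (V.indicator (1 : UnitAddCircle → ℝ)) (haarAddCircle (T := (1:ℝ))) :=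
    (integrable_const (1:ℝ)).indicator hVo.measurableSet
  have hI3 := hcontP.integral_prod_left
  simp only [Function.uncurry] at hI3
  have hfin := integral_mono (μ := haarAddCircle (T := (1:ℝ))) ((integrable_const (1:ℝ)).sub hI1)
    ((hI2.add (integrable_const (4 * ε))).add (hI3.const_mul 4)) key2
  have e1 : ∫ w, ((1:ℝ) - ‖b w‖ ^ 2) ∂(haarAddCircle (T := (1:ℝ))) = 1 - ∫ w, ‖b w‖ ^ 2 ∂haarAddCircle := by
    rw [integral_sub (integrable_const _) hI1]; simp
  have e2 : ∫ w, (V.indicator 1 w + 4 * ε + 4 * ∫ z in Kᶜ, pp r z w ∂m) ∂(haarAddCircle (T := (1:ℝ)))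
      = (haarAddCircle (T := (1:ℝ))).real V + 4 * ε + 4 * ∫ w, ∫ z in Kᶜ, pp r z w ∂m ∂haarAddCircle := by
    have hI4 : Integrable (fun w => V.indicator (1 : UnitAddCircle → ℝ) w + 4 * ε)
      (haarAddCircle (T := (1:ℝ))) := hI2.add (integrable_const _)
    rw [integral_add hI4 (hI3.const_mul 4), integral_add hI2 (integrable_const _),
      integral_indicator_one hVo.measurableSet, integral_const]
    simp only [probReal_univ, one_smul]
    rw [integral_const_mul]
  have e3 : ∫ w, ∫ z in Kᶜ, pp r z w ∂m ∂(haarAddCircle (T := (1:ℝ))) ≤ ε := by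
    rw [integral_integral_swap hcontP]
    calc _ ≤ ∫ z in Kᶜ, (1:ℝ) ∂m :=
          integral_mono hcontP.swap.integral_prod_left (integrable_const _)
            (fun z => pp_int r hr hr1 z)
      _ ≤ ε := by simpa using hmKc
  have hfin' := (e1.symm.le.trans hfin).trans e2.le
  linarith
end Main1

section L2part
open AddCircle

lemma mulF_memLp (m : Measure UnitAddCircle) (k : ℤ) (f : Lp ℂ 2 m) :
    MemLp (fun x => (fourier k x : ℂ) * f x) 2 m := by
  refine (Lp.memLp f).congr_norm ?_ ?_
  · exact (fourier k).continuous.aestronglyMeasurable.mul (Lp.aestronglyMeasurable f)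
  · refine Eventually.of_forall fun x => ?_
    rw [norm_mul, fourier_norm_one, one_mul]

/-- multiplication by a character -/
noncomputable def mulF (m : Measure UnitAddCircle) (k : ℤ) : Lp ℂ 2 m →ₗᵢ[ℂ] Lp ℂ 2 m where
  toFun f := (mulF_memLp m k f).toLp _
  map_add' f g := by
    apply Lp.ext
    filter_upwards [MemLp.coeFn_toLp (mulF_memLp m k f), MemLp.coeFn_toLp (mulF_memLp m k g),
      MemLp.coeFn_toLp (mulF_memLp m k (f + g)), Lp.coeFn_add f g,
      Lp.coeFn_add ((mulF_memLp m k f).toLp _) ((mulF_memLp m k g).toLp _)] with x h1 h2 h3 h4 h5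
    rw [h3, h5, Pi.add_apply, h1, h2, h4, Pi.add_apply, mul_add]
  map_smul' c f := by
    apply Lp.ext
    filter_upwards [MemLp.coeFn_toLp (mulF_memLp m k f),
      MemLp.coeFn_toLp (mulF_memLp m k (c • f)), Lp.coeFn_smul c f,
      Lp.coeFn_smul c ((mulF_memLp m k f).toLp _)] with x h1 h2 h3 h4
    simp only [RingHom.id_apply]
    rw [h2, h4, Pi.smul_apply, h1, h3, Pi.smul_apply, smul_eq_mul, smul_eq_mul]
    ring
  norm_map' f := by
    change ‖(mulF_memLp m k f).toLp _‖ = ‖f‖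
    rw [Lp.norm_toLp, Lp.norm_def]
    congr 1
    refine eLpNorm_congr_norm_ae (Eventually.of_forall fun x => ?_)
    rw [norm_mul, fourier_norm_one, one_mul]

lemma mulF_coe (m : Measure UnitAddCircle) (k : ℤ) (f : Lp ℂ 2 m) :
    mulF m k f =ᵐ[m] fun x => (fourier k x : ℂ) * f x :=
  MemLp.coeFn_toLp (mulF_memLp m k f)

/-- characters in `L²(m)` -/
noncomputable def ee (m : Measure UnitAddCircle) [IsFiniteMeasure m] (n : ℤ) : Lp ℂ 2 m :=
  ContinuousMap.toLp (E := ℂ) 2 m ℂ (fourier n)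

lemma ee_coe (m : Measure UnitAddCircle) [IsFiniteMeasure m] (n : ℤ) :
    ee m n =ᵐ[m] fun x => (fourier n x : ℂ) :=
  ContinuousMap.coeFn_toLp m _

lemma mulF_ee (m : Measure UnitAddCircle) [IsFiniteMeasure m] (k n : ℤ) :
    mulF m k (ee m n) = ee m (n + k) := by
  apply Lp.ext
  filter_upwards [mulF_coe m k (ee m n), ee_coe m n, ee_coe m (n + k)] with x h1 h2 h3
  rw [h1, h2, h3, fourier_add, mul_comm]

lemma mulF_mulF (m : Measure UnitAddCircle) (f : Lp ℂ 2 m) :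
    mulF m 1 (mulF m (-1) f) = f := by
  apply Lp.ext
  filter_upwards [mulF_coe m 1 (mulF m (-1) f), mulF_coe m (-1) f] with x h1 h2
  rw [h1, h2, ← mul_assoc, ← fourier_add]; simp

lemma ee_inner (m : Measure UnitAddCircle) [IsFiniteMeasure m] (n : ℤ) (f : Lp ℂ 2 m) :
    inner ℂ (ee m n) f = ∫ x, f x * (fourier (-n) x : ℂ) ∂m := by
  rw [L2.inner_def]
  refine integral_congr_ae ?_
  filter_upwards [ee_coe m n] with x h1
  rw [h1, fourier_neg]; rfl

lemma ee_inner_ee (m : Measure UnitAddCircle) [IsFiniteMeasure m] (n k : ℤ) :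
    inner ℂ (ee m n) (ee m k) = ∫ x, (fourier (-(n - k)) x : ℂ) ∂m := by
  rw [ee_inner]
  refine integral_congr_ae ?_
  filter_upwards [ee_coe m k] with x h1
  rw [h1, ← fourier_add]
  congr 2; ring

lemma ee_norm (m : Measure UnitAddCircle) [IsProbabilityMeasure m] (n : ℤ) : ‖ee m n‖ = 1 := by
  have h := inner_self_eq_norm_sq_to_K (𝕜 := ℂ) (ee m n)
  rw [ee_inner_ee] at h
  simp at h
  have h2 : (‖ee m n‖ : ℝ) ^ 2 = 1 := by
    apply Complex.ofReal_injective
    push_cast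
    exact h.symm
  exact (pow_eq_one_iff_of_nonneg (norm_nonneg _) two_ne_zero).1 h2

lemma ee_dense (m : Measure UnitAddCircle) [IsFiniteMeasure m] :
    Dense (Submodule.span ℂ (Set.range (ee m)) : Set (Lp ℂ 2 m)) := by
  have h := (ContinuousMap.toLp_denseRange (p := 2) ℂ m ℂ (by simp)).topologicalClosure_map_submodule
      (span_fourier_closure_eq_top (T := (1:ℝ)))
  rw [Submodule.map_span, ← Set.range_comp] at h
  exact Submodule.dense_iff_topologicalClosure_eq_top.2 h

lemma conv_L2 (m : Measure UnitAddCircle) [IsProbabilityMeasure m]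
    (hm : m.MutuallySingular haarAddCircle) (a α : ℕ → ℂ)
    (ha : ∀ n : ℕ, a n = ∫ z, fourier (-(n : ℤ)) z ∂m)
    (hconv : PowerSeries.mk α * PowerSeries.mk a = 1) (hα0 : α 0 = 1) (f : Lp ℂ 2 m) :
    Tendsto (fun N : ℕ => ‖f - ∑ n ∈ Finset.range N,
      (∑ j ∈ Finset.range (n + 1), α (n - j) * inner ℂ (ee m (j : ℤ)) f) • ee m (n : ℤ)‖)
      atTop (nhds 0) := by
  let V := mulF m (-1)
  let U := mulF m 1
  let A : Lp ℂ 2 m →ₗ[ℂ] Lp ℂ 2 m :=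
    V.toLinearMap ∘ₗ (LinearMap.id - (innerₛₗ ℂ (ee m 0)).smulRight (ee m 0))
  have hA : ∀ f, A f = V (f - (inner ℂ (ee m 0) f) • ee m 0) := fun f => rfl
  have hUe : ∀ n, U (ee m n) = ee m (n + 1) := mulF_ee m 1
  have hVe : ∀ n, V (ee m n) = ee m (n - 1) := mulF_ee m (-1)
  have hUV : ∀ f, U (V f) = f := mulF_mulF m
  have ha0 : a 0 = 1 := by rw [ha]; simp
  have hconv' : PowerSeries.mk a * PowerSeries.mk α = 1 := by rw [mul_comm]; exact hconv
  have hc : ∀ (f : Lp ℂ 2 m) (n : ℕ), inner ℂ (ee m 0) ((A ^ n) f) =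
      ∑ j ∈ Finset.range (n + 1), α (n - j) * inner ℂ (ee m (j : ℤ)) f := by
    intro f n
    have h1 : PowerSeries.mk (fun n : ℕ => (inner ℂ (ee m (n : ℤ)) f : ℂ)) =
        PowerSeries.mk (fun n : ℕ => (inner ℂ (ee m 0) ((A ^ n) f) : ℂ)) * PowerSeries.mk a := by
      ext N
      rw [PowerSeries.coeff_mul, Finset.Nat.sum_antidiagonal_eq_sum_range_succ_mk]
      simp only [PowerSeries.coeff_mk]
      rw [kz_inner U V hUV (ee m) hUe A hA f N, Finset.sum_range_succ]
      simp only [Nat.sub_self, ha0, mul_one]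
      congr 1
      refine Finset.sum_congr rfl fun k hk => ?_
      rw [ee_inner_ee, ha, Nat.cast_sub (Finset.mem_range.1 hk).le]
    have h2 : PowerSeries.mk (fun n : ℕ => (inner ℂ (ee m 0) ((A ^ n) f) : ℂ)) =
        PowerSeries.mk (fun n : ℕ => (inner ℂ (ee m (n : ℤ)) f : ℂ)) * PowerSeries.mk α := by
      rw [h1, mul_assoc, hconv', mul_one]
    have h3 := congrArg (PowerSeries.coeff n) h2
    rw [PowerSeries.coeff_mul, Finset.Nat.sum_antidiagonal_eq_sum_range_succ_mk] at h3
    simp only [PowerSeries.coeff_mk] at h3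
    rw [h3]
    exact Finset.sum_congr rfl fun _ _ => mul_comm _ _
  have hcm : ∀ n : ℕ, inner ℂ (ee m 0) ((A ^ n) (ee m (-1))) = - α (n + 1) := by
    intro n
    rw [hc]
    have h3 := congrArg (PowerSeries.coeff (n + 1)) hconv'
    rw [PowerSeries.coeff_mul, Finset.Nat.sum_antidiagonal_eq_sum_range_succ_mk,
      Finset.sum_range_succ', PowerSeries.coeff_one, if_neg (by omega)] at h3
    simp only [PowerSeries.coeff_mk, ha0, Nat.sub_zero, one_mul, Nat.add_sub_add_right] at h3
    rw [← eq_neg_iff_add_eq_zero] at h3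
    rw [← h3]
    refine Finset.sum_congr rfl fun j _ => ?_
    rw [ee_inner_ee, ha, mul_comm]
    congr 3
  have hnp : ∀ N, ‖(A ^ N) (ee m (-1))‖ ^ 2 = 1 - ∑ n ∈ Finset.range N, ‖α (n + 1)‖ ^ 2 := by
    intro N
    rw [kz_norm_pow V (ee m 0) (ee_norm m 0) A hA, ee_norm]
    simp [hcm]
  have hmono : Monotone fun N => ∑ n ∈ Finset.range N, ‖α (n + 1)‖ ^ 2 := by
    refine monotone_nat_of_le_succ fun N => ?_
    rw [Finset.sum_range_succ]
    have : 0 ≤ ‖α (N + 1)‖ ^ 2 := by positivity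
    linarith
  have hz : Tendsto (fun N => (A ^ N) (ee m (-1))) atTop (nhds 0) := by
    have hbdd : BddAbove (Set.range fun N => ∑ n ∈ Finset.range N, ‖α (n + 1)‖ ^ 2) := by
      refine ⟨1, ?_⟩
      rintro _ ⟨N, rfl⟩
      have := hnp N
      have h2 : 0 ≤ ‖(A ^ N) (ee m (-1))‖ ^ 2 := by positivity
      simp only; linarith
    have ht := tendsto_atTop_ciSup hmono hbdd
    have h1 : 1 ≤ ⨆ N, ∑ n ∈ Finset.range N, ‖α (n + 1)‖ ^ 2 :=
      inner_fn m hm a α ha hconv hα0 _ (fun N => le_ciSup hbdd N)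
    have h2 : (⨆ N, ∑ n ∈ Finset.range N, ‖α (n + 1)‖ ^ 2) ≤ 1 := by
      refine ciSup_le fun N => ?_
      have := hnp N
      have h2 : 0 ≤ ‖(A ^ N) (ee m (-1))‖ ^ 2 := by positivity
      linarith
    rw [le_antisymm h2 h1] at ht
    have h3 : Tendsto (fun N => ‖(A ^ N) (ee m (-1))‖ ^ 2) atTop (nhds 0) := by
      simp_rw [hnp]
      simpa using ht.const_sub 1
    rw [tendsto_zero_iff_norm_tendsto_zero]
    have h4 := h3.sqrt
    simpa [Real.sqrt_sq (norm_nonneg _)] using h4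
  have hall := kz_all V (ee m) (ee_norm m 0) hVe A hA (ee_dense m) hz f
  rw [tendsto_zero_iff_norm_tendsto_zero] at hall
  refine hall.congr fun N => ?_
  have hd := kz_decomp U V hUV (ee m) hUe A hA f N
  simp_rw [← hc]
  rw [← kz_iter_norm U ((A ^ N) f) N]
  congr 1
  rw [eq_sub_iff_add_eq, add_comm]
  exact hd.symm
end L2part

/-- the section of the covering map with values in `[0,1)` -/
noncomputable def sec (t : UnitAddCircle) : ℝ := (AddCircle.measurableEquivIco 1 0 t : ℝ)

lemma sec_meas : Measurable sec :=
  measurable_subtype_coe.comp (AddCircle.measurableEquivIco 1 0).measurable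

lemma coe_sec (t : UnitAddCircle) : ((sec t : ℝ) : UnitAddCircle) = t :=
  AddCircle.coe_equivIco (p := (1:ℝ)) (a := 0)

lemma sec_coe (x : ℝ) (hx : x ∈ Set.Ico (0:ℝ) 1) : sec (x : UnitAddCircle) = x := by
  have h := AddCircle.equivIco_coe_eq (p := (1:ℝ)) (a := 0) (x := x) (by simpa using hx)
  change ((AddCircle.equivIco 1 0 (x : UnitAddCircle) : Set.Ico (0:ℝ) (0 + 1)) : ℝ) = x
  rw [h]

lemma fourier_sec (n : ℤ) (t : UnitAddCircle) :
    (fourier n t : ℂ) = Complex.exp (2 * Real.pi * Complex.I * n * sec t) := by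
  conv_lhs => rw [← coe_sec t]
  rw [fourier_coe_apply]
  simp

lemma coe_meas : Measurable ((↑) : ℝ → UnitAddCircle) := AddCircle.measurable_mk'

lemma map_sec (μ : Measure ℝ) (hsupp : μ (Set.Ico (0 : ℝ) 1)ᶜ = 0) :
    (μ.map ((↑) : ℝ → UnitAddCircle)).map sec = μ := by
  rw [Measure.map_map sec_meas coe_meas]
  have h : (sec ∘ ((↑) : ℝ → UnitAddCircle)) =ᵐ[μ] id := by
    have h0 : ∀ᵐ x ∂μ, x ∈ Set.Ico (0:ℝ) 1 := hsupp
    filter_upwards [h0] with x hx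
    exact sec_coe x hx
  rw [Measure.map_congr h, Measure.map_id]

lemma sing_map (μ : Measure ℝ) (hsupp : μ (Set.Ico (0 : ℝ) 1)ᶜ = 0)
    (hsing : μ.MutuallySingular MeasureTheory.volume) :
    (μ.map ((↑) : ℝ → UnitAddCircle)).MutuallySingular AddCircle.haarAddCircle := by
  obtain ⟨S, hS, h1, h2⟩ := hsing
  have hB : MeasurableSet (sec ⁻¹' S) := sec_meas hS
  refine ⟨sec ⁻¹' S, hB, ?_, ?_⟩
  · rw [← Measure.map_apply sec_meas hS, map_sec μ hsupp, h1]
  · have hv : (volume : Measure UnitAddCircle) = AddCircle.haarAddCircle := by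
      have := AddCircle.volume_eq_smul_haarAddCircle (T := (1:ℝ))
      simpa using this
    rw [← hv, ← (UnitAddCircle.measurePreserving_mk 0).map_eq,
      Measure.map_apply coe_meas hB.compl,
      Measure.restrict_apply (coe_meas hB.compl)]
    refine measure_mono_null (t := Sᶜ ∪ {1}) ?_ (measure_union_null h2 (by simp))
    rintro x ⟨hx, hx2⟩
    by_cases hx1 : x = 1
    · right; exact hx1
    · left
      have hx3 : x ∈ Set.Ico (0:ℝ) 1 :=
        ⟨hx2.1.le, lt_of_le_of_ne (by simpa using hx2.2) hx1⟩
      simpa [sec_coe x hx3] using hx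

/-- Let `μ` be a singular Borel probability measure on `[0,1)` with
Fourier–Stieltjes transform `μ̂` and composition-sum coefficients `α_n`.  If
`F : ℝ → ℂ` has the form `F(y) = ∫₀¹ f(x) exp(-2πiyx) dμ(x)` for some `f ∈ L²(μ)`, then
`F(y) = Σ_{n=0}^∞ (Σ_{j=0}^n α_{n-j} F(j)) μ̂(y - n)`, the partial sums converging
uniformly in `y ∈ ℝ`. -/
theorem shannon_sampling_formula
    (μ : Measure ℝ) [IsProbabilityMeasure μ]
    (hsupp : μ (Set.Ico (0 : ℝ) 1)ᶜ = 0)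
    (hsing : μ.MutuallySingular MeasureTheory.volume)
    (μhat : ℝ → ℂ)
    (hμhat : ∀ x : ℝ, μhat x = ∫ y, Complex.exp (-(2 * Real.pi * Complex.I * x * y)) ∂μ)
    (α : ℕ → ℂ)
    (hα0 : α 0 = 1)
    (hα : ∀ n : ℕ, 0 < n → α n = ∑ p : Composition n,
      (-1 : ℂ) ^ p.length * (p.blocks.map fun q => μhat (q : ℝ)).prod)
    (f : Lp ℂ 2 μ) (F : ℝ → ℂ)
    (hF : ∀ y : ℝ, F y =
      ∫ x, (f : ℝ → ℂ) x * Complex.exp (-(2 * Real.pi * Complex.I * y * x)) ∂μ) :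
    TendstoUniformly
      (fun N : ℕ => fun y : ℝ => ∑ n ∈ Finset.range N,
        (∑ j ∈ Finset.range (n + 1), α (n - j) * F (j : ℝ)) * μhat (y - n))
      F atTop := by
  
  set m : Measure UnitAddCircle := μ.map ((↑) : ℝ → UnitAddCircle) with hm
  have hmp : IsProbabilityMeasure m := Measure.isProbabilityMeasure_map coe_meas.aemeasurable
  have hms : m.map sec = μ := map_sec μ hsupp
  have hInteg : ∀ h : ℝ → ℂ, AEStronglyMeasurable h μ → ∫ x, h x ∂μ = ∫ t, h (sec t) ∂m := by
    intro h hh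
    rw [← hms] at hh ⊢
    exact integral_map sec_meas.aemeasurable hh
  have hfm : MemLp (fun t => f (sec t)) 2 m :=
    (Lp.memLp f).comp_measurePreserving ⟨sec_meas, hms⟩
  let g : Lp ℂ 2 m := hfm.toLp _
  have hg : g =ᵐ[m] fun t => f (sec t) := MemLp.coeFn_toLp hfm
  have hexp : ∀ y : ℝ, Continuous fun x : ℝ => Complex.exp (-(2 * Real.pi * Complex.I * y * x)) := by
    intro y; fun_prop
  have hkm : ∀ y : ℝ, MemLp (fun t => Complex.exp (2 * Real.pi * Complex.I * y * sec t)) 2 m := by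
    intro y
    refine MemLp.of_bound ?_ 1 (Eventually.of_forall fun t => ?_)
    · have h1 : Continuous fun x : ℝ => Complex.exp (2 * Real.pi * Complex.I * y * x) := by fun_prop
      exact (h1.measurable.comp sec_meas).aestronglyMeasurable
    · have : (2 * Real.pi * Complex.I * y * sec t : ℂ) = ((2 * Real.pi * y * sec t : ℝ) : ℂ) * Complex.I := by
        push_cast; ring
      rw [this, Complex.norm_exp_ofReal_mul_I]
  let k : ℝ → Lp ℂ 2 m := fun y => (hkm y).toLp _
  have hconj : ∀ y x : ℝ, (starRingEnd ℂ) (Complex.exp (2 * Real.pi * Complex.I * y * x)) =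
      Complex.exp (-(2 * Real.pi * Complex.I * y * x)) := by
    intro y x
    rw [← Complex.exp_conj]
    have h2 : (starRingEnd ℂ) 2 = 2 := Complex.conj_ofNat 2
    simp [h2]
  have hk : ∀ (y : ℝ) (h : Lp ℂ 2 m), inner ℂ (k y) h =
      ∫ t, h t * Complex.exp (-(2 * Real.pi * Complex.I * y * sec t)) ∂m := by
    intro y h
    rw [L2.inner_def]
    refine integral_congr_ae ?_
    filter_upwards [MemLp.coeFn_toLp (hkm y)] with t ht
    rw [← hconj, ← ht]; rfl
  have hknorm : ∀ y, ‖k y‖ ≤ 1 := by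
    intro y
    have h := inner_self_eq_norm_sq_to_K (𝕜 := ℂ) (k y)
    rw [hk] at h
    have h3 : ∫ t, (k y) t * Complex.exp (-(2 * Real.pi * Complex.I * y * sec t)) ∂m = ∫ t, (1:ℂ) ∂m := by
      refine integral_congr_ae ?_
      filter_upwards [MemLp.coeFn_toLp (hkm y)] with t ht
      rw [ht, ← Complex.exp_add]; simp
    rw [h3] at h
    have h2 : (‖k y‖ : ℝ) ^ 2 = 1 := by
      apply Complex.ofReal_injective
      push_cast
      simpa using h.symm
    exact ((pow_eq_one_iff_of_nonneg (norm_nonneg _) two_ne_zero).1 h2).le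
  have hkg : ∀ y, inner ℂ (k y) g = F y := by
    intro y
    rw [hk, hF, hInteg (fun x => f x * Complex.exp (-(2 * Real.pi * Complex.I * y * x)))
      ((Lp.aestronglyMeasurable f).mul (hexp y).aestronglyMeasurable)]
    refine integral_congr_ae ?_
    filter_upwards [hg] with t ht
    rw [ht]
  have hke : ∀ (y : ℝ) (n : ℕ), inner ℂ (k y) (ee m (n : ℤ)) = μhat (y - n) := by
    intro y n
    rw [hk, hμhat, hInteg _ (hexp _).aestronglyMeasurable]
    refine integral_congr_ae ?_
    filter_upwards [ee_coe m n] with t ht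
    rw [ht, fourier_sec, ← Complex.exp_add]
    congr 1
    push_cast; ring
  have heg : ∀ j : ℕ, inner ℂ (ee m (j : ℤ)) g = F j := by
    intro j
    rw [← hkg]
    congr 1
    apply Lp.ext
    filter_upwards [ee_coe m j, MemLp.coeFn_toLp (hkm j)] with t h1 h2
    rw [h1, h2, fourier_sec]
    simp
  have ha : ∀ n : ℕ, μhat (n : ℝ) = ∫ z, fourier (-(n : ℤ)) z ∂m := by
    intro n
    rw [hμhat, hInteg _ (hexp _).aestronglyMeasurable]
    refine integral_congr_ae (Eventually.of_forall fun t => ?_)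
    simp only [fourier_sec]
    congr 1
    push_cast; ring
  have ha0 : μhat ((0 : ℕ) : ℝ) = 1 := by rw [ha]; simp
  have hα' : ∀ n : ℕ, 0 < n → α n = ∑ p : Composition n,
      (-1 : ℂ) ^ p.length * (p.blocks.map (fun n : ℕ => μhat (n : ℝ))).prod := by
    intro n hn
    rw [hα n hn]
    refine Finset.sum_congr rfl fun p _ => ?_
    congr 2
    simp only [List.bind_eq_flatMap, List.pure_def]
    induction p.blocks with
    | nil => rfl
    | cons b l ih => simpa using ih
  have hconv := alpha_conv (fun n : ℕ => μhat (n : ℝ)) α ha0 hα0 hα'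
  have hL2 := conv_L2 m (sing_map μ hsupp hsing) (fun n : ℕ => μhat (n : ℝ)) α ha hconv hα0 g
  rw [Metric.tendstoUniformly_iff]
  intro ε hε
  filter_upwards [hL2.eventually (gt_mem_nhds hε)] with N hN y
  refine lt_of_le_of_lt ?_ hN
  rw [dist_eq_norm]
  have hfin : F y - ∑ n ∈ Finset.range N,
        (∑ j ∈ Finset.range (n + 1), α (n - j) * F (j : ℝ)) * μhat (y - n) =
      inner ℂ (k y) (g - ∑ n ∈ Finset.range N,
        (∑ j ∈ Finset.range (n + 1), α (n - j) * inner ℂ (ee m (j : ℤ)) g) • ee m (n : ℤ)) := by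
    rw [inner_sub_right, inner_sum, hkg]
    simp only [inner_smul_right, hke, heg]
  rw [hfin]
  refine (norm_inner_le_norm _ _).trans ?_
  exact mul_le_of_le_one_left (norm_nonneg _) (hknorm y)
end
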